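/- Let n ≥ 4 and let (X_e)_{e ∈ E(K_n)} be independent real-valued random variables with P(X_e = X_{e'}) = 0 for all distinct edges e, e' (a non-colliding product measure), such that the topological support of the law of each X_e is a connected subset of ℝ. If there exist two distinct edges e and e' of K_n sharing a common endpoint such that X_e and X_{e'} have the same distribution, then the induced minimum-spanning-tree distribution on spanning trees of K_n is not uniform: there exist spanning trees T, T' of K_n such that the probability that T is the unique minimum-weight spanning tree for the weights (X_e) differs from the corresponding probability for T'. -/

import Mathlib

open MeasureTheory SimpleGraph
open scoped Classical

noncomputable section

namespace RST

variable {V : Type*}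

/-- The graph on `V` whose edge set is the finset `T`. -/
def spanGraph (T : Finset (Sym2 V)) : SimpleGraph V :=
  SimpleGraph.fromEdgeSet ↑T

/-- `T` is (the edge set of) a spanning tree of `G`. -/
def IsSpanningTree (G : SimpleGraph V) (T : Finset (Sym2 V)) : Prop :=
  ↑T ⊆ G.edgeSet ∧ (spanGraph T).Connected ∧ (spanGraph T).IsAcyclic

/-- Total weight `∑_{e ∈ T} w e` of the tree `T`. -/
def treeWeight (G : SimpleGraph V) [Fintype V] (w : G.edgeSet → ℝ) (T : Finset (Sym2 V)) : ℝ :=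
  ∑ e : G.edgeSet, if (e : Sym2 V) ∈ T then w e else 0

/-- The event that `T` is the unique minimum-weight spanning tree of `G`. -/
def mstEvent (G : SimpleGraph V) [Fintype V] (T : Finset (Sym2 V)) : Set (G.edgeSet → ℝ) :=
  {w | IsSpanningTree G T ∧ ∀ T' : Finset (Sym2 V), IsSpanningTree G T' → T' ≠ T →
    treeWeight G w T < treeWeight G w T'}

/-- The topological support of a measure on `ℝ`: the set of points all of whose open
neighborhoods have positive measure (equivalently, the smallest closed set of full
measure). -/
def measSupport (μ : Measure ℝ) : Set ℝ :=
  {x | ∀ U : Set ℝ, IsOpen U → x ∈ U → 0 < μ U}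

/-!
A spanning tree is the minimum one as soon as each remaining edge is heavier than the rest of its
fundamental cycle. Suppose that all spanning trees are equally likely, so that each has positive
probability. Any edge `g` lies on the fundamental cycle of any other edge `f` with respect to some
spanning tree, hence `X_g < X_f` with positive probability. The supports are intervals, so they
share a point that is interior to all of them but at most one, and around it the weights take every
prescribed order with positive probability.

Let now `X_{xy}` and `X_{xz}` have the same law. Exchanging these two weights preserves the joint
law, and it maps the event that the minimum spanning tree is the star at `z` with its leaf `x`
hooked to `y` into the event that it is the star at `z`. With a fourth vertex `u`, the second event
also contains weights with `X_{xu} < X_{yz}`, an order that the first one excludes. Hence the star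
is strictly more likely than the hooked star.
-/

section SpanningTree

variable {G : SimpleGraph V} {T : Finset (Sym2 V)}

lemma spanGraph_adj {a b : V} : (spanGraph T).Adj a b ↔ s(a, b) ∈ T ∧ a ≠ b :=
  fromEdgeSet_adj _

lemma spanGraph_edgeFinset (H : SimpleGraph V) [Fintype H.edgeSet] :
    spanGraph H.edgeFinset = H := by
  rw [spanGraph, coe_edgeFinset, fromEdgeSet_edgeSet]

lemma edgeSet_spanGraph (hT : ↑T ⊆ G.edgeSet) : (spanGraph T).edgeSet = ↑T := by
  rw [spanGraph, edgeSet_fromEdgeSet, sdiff_eq_left]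
  exact Set.disjoint_left.2 fun e he => G.not_isDiag_of_mem_edgeSet (hT he)

lemma mem_of_mem_edges_spanGraph {a b : V} {p : (spanGraph T).Walk a b} {g : Sym2 V}
    (hg : g ∈ p.edges) : g ∈ T := by
  have hg' := p.edges_subset_edgeSet hg
  rw [spanGraph, edgeSet_fromEdgeSet] at hg'
  exact hg'.1

lemma isSpanningTree_edgeFinset {H : SimpleGraph V} [Fintype H.edgeSet] (hle : H ≤ G)
    (hH : H.IsTree) : IsSpanningTree G H.edgeFinset := by
  refine ⟨by simpa using hle, ?_, ?_⟩ <;> rw [spanGraph_edgeFinset]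
  exacts [hH.connected, hH.isAcyclic]

lemma IsSpanningTree.isTree (hT : IsSpanningTree G T) : (spanGraph T).IsTree :=
  ⟨hT.2.1, hT.2.2⟩

lemma IsSpanningTree.card_add_one [Fintype V] (hT : IsSpanningTree G T) :
    T.card + 1 = Fintype.card V := by
  have hedges : (spanGraph T).edgeFinset = T :=
    Finset.coe_inj.1 ((coe_edgeFinset _).trans (edgeSet_spanGraph hT.1))
  have hcard := hT.isTree.card_edgeFinset
  rwa [hedges] at hcard

lemma IsSpanningTree.eq_of_subset [Finite V] {T' : Finset (Sym2 V)} (hT : IsSpanningTree G T)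
    (hT' : IsSpanningTree G T') (h : T' ⊆ T) : T' = T := by
  have := Fintype.ofFinite V
  exact Finset.eq_of_subset_of_card_le h
    (by have := hT.card_add_one; have := hT'.card_add_one; omega)

lemma isTree_of_isAcyclic_of_card [Finite V] [Nonempty V] {F : SimpleGraph V} (hF : F.IsAcyclic)
    (hcard : Nat.card V ≤ Nat.card F.edgeSet + 1) : F.IsTree := by
  obtain ⟨H, hFH, -, hH⟩ := connected_top.exists_isTree_le_of_le_of_isAcyclic le_top hF
  have hcardH := (isTree_iff_connected_and_card.1 hH).2
  have : F.edgeSet = H.edgeSet :=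
    Set.eq_of_subset_of_ncard_le (edgeSet_mono hFH)
      (by rw [← Nat.card_coe_set_eq, ← Nat.card_coe_set_eq]; omega)
  rwa [edgeSet_inj.1 this]

section Exchange

lemma notMem_of_not_reachable {a b : V} (h : ¬(spanGraph T).Reachable a b) : s(a, b) ∉ T :=
  fun hab => h <| (eq_or_ne a b).elim (fun hne => hne ▸ .refl a)
    fun hne => (spanGraph_adj.2 ⟨hab, hne⟩).reachable

lemma not_reachable_deleteEdges_of_isPath (hG : G.IsAcyclic) {a b : V} {p : G.Walk a b}
    (hp : p.IsPath) {g : Sym2 V} (hg : g ∈ p.edges) : ¬(G.deleteEdges {g}).Reachable a b := by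
  intro h
  obtain ⟨q, hq⟩ := h.exists_isPath
  have hle := G.deleteEdges_le {g}
  have := hG.subsingleton_path a b
  have hpq : p = q.mapLe hle := congrArg Subtype.val <|
    Subsingleton.elim (⟨p, hp⟩ : G.Path a b) ⟨q.mapLe hle, hq.mapLe hle⟩
  rw [hpq, Walk.edges_mapLe_eq_edges] at hg
  simpa using q.edges_subset_edgeSet hg

variable [DecidableEq V]

lemma spanGraph_insert (T : Finset (Sym2 V)) (a b : V) :
    spanGraph (insert s(a, b) T) = spanGraph T ⊔ edge a b := by
  rw [spanGraph, Finset.coe_insert, Set.insert_eq, Set.union_comm, spanGraph, edge,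
    fromEdgeSet_union]

lemma spanGraph_erase (T : Finset (Sym2 V)) (g : Sym2 V) :
    spanGraph (T.erase g) = (spanGraph T).deleteEdges {g} := by
  rw [spanGraph, Finset.coe_erase, spanGraph, deleteEdges_fromEdgeSet]

lemma IsSpanningTree.exchange [Finite V] (hT : IsSpanningTree G T) {g : Sym2 V} (hg : g ∈ T)
    {a b : V} (hab : G.Adj a b) (h : ¬(spanGraph (T.erase g)).Reachable a b) :
    IsSpanningTree G (insert s(a, b) (T.erase g)) := by
  have := Fintype.ofFinite V
  have := hT.2.1.nonempty
  have hsub : ↑(insert s(a, b) (T.erase g)) ⊆ G.edgeSet := by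
    rw [Finset.coe_insert, Set.insert_subset_iff]
    exact ⟨hab, (Finset.coe_subset.2 (T.erase_subset g)).trans hT.1⟩
  have hacyclic : (spanGraph (insert s(a, b) (T.erase g))).IsAcyclic := by
    rw [spanGraph_insert]
    refine IsAcyclic.sup_edge_of_not_reachable h ?_
    rw [spanGraph_erase]
    exact hT.2.2.anti (deleteEdges_le _)
  have htree := isTree_of_isAcyclic_of_card hacyclic <| by
    rw [edgeSet_spanGraph hsub, Nat.card_coe_set_eq, Set.ncard_coe_finset,
      Finset.card_insert_of_notMem (notMem_of_not_reachable h), Finset.card_erase_add_one hg,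
      hT.card_add_one, Nat.card_eq_fintype_card]
  exact ⟨hsub, htree.connected, htree.isAcyclic⟩

lemma IsSpanningTree.exchange_of_isPath [Finite V] (hT : IsSpanningTree G T) {a b : V}
    (hab : G.Adj a b) {p : (spanGraph T).Walk a b} (hp : p.IsPath) {g : Sym2 V}
    (hg : g ∈ p.edges) : IsSpanningTree G (insert s(a, b) (T.erase g)) := by
  refine hT.exchange (mem_of_mem_edges_spanGraph hg) hab ?_
  rw [spanGraph_erase]
  exact not_reachable_deleteEdges_of_isPath hT.2.2 hp hg

/-- Deleting `s(c, d)` from `T` separates `c` from `d`, so the walk crosses the cut. -/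
lemma IsSpanningTree.exists_exchange_of_walk [Finite V] (hT : IsSpanningTree G T) {c d : V}
    (hcd : s(c, d) ∈ T) {H : SimpleGraph V} (hH : H ≤ G) (p : H.Walk c d) :
    ∃ a b, s(a, b) ∈ p.edges ∧ s(a, b) ∉ T.erase s(c, d) ∧
      IsSpanningTree G (insert s(a, b) (T.erase s(c, d))) := by
  let component : Set V := {v | (spanGraph (T.erase s(c, d))).Reachable c v}
  have hd : d ∉ component := by
    have hbridge : (spanGraph T).IsBridge s(c, d) :=
      isAcyclic_iff_forall_isBridge.1 hT.2.2 (by rwa [edgeSet_spanGraph hT.1])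
    rwa [isBridge_iff, ← spanGraph_erase] at hbridge
  obtain ⟨e, he, hfst, hsnd⟩ := p.exists_boundary_dart component (Reachable.refl c) hd
  have hcut : ¬(spanGraph (T.erase s(c, d))).Reachable e.fst e.snd :=
    fun h => hsnd (Reachable.trans hfst h)
  exact ⟨e.fst, e.snd, List.mem_map_of_mem (f := Dart.edge) he, notMem_of_not_reachable hcut,
    hT.exchange hcd (hH e.adj) hcut⟩

end Exchange

end SpanningTree

section MinimumSpanningTree

variable {G : SimpleGraph V} {w : G.edgeSet → ℝ} {T : Finset (Sym2 V)}

/-- The weights `w` on the edges of `G`, extended by `0` to all unordered pairs of vertices; this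
spares membership proofs when the weight of a concrete pair `s(a, b)` is meant. -/
def extendWeight (w : G.edgeSet → ℝ) : Sym2 V → ℝ :=
  Function.extend Subtype.val w 0

lemma extendWeight_coe (w : G.edgeSet → ℝ) (e : G.edgeSet) : extendWeight w e = w e :=
  Subtype.val_injective.extend_apply w 0 e

lemma extendWeight_of_notMem (w : G.edgeSet → ℝ) {s : Sym2 V} (hs : s ∉ G.edgeSet) :
    extendWeight w s = 0 :=
  Function.extend_apply' w _ s fun ⟨e, he⟩ => hs (he ▸ e.2)

lemma extendWeight_comp_swap [DecidableEq V] (w : G.edgeSet → ℝ) (e e' : G.edgeSet) (s : Sym2 V) :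
    extendWeight (w ∘ Equiv.swap e e') s = extendWeight w (Equiv.swap (e : Sym2 V) e' s) := by
  by_cases hs : s ∈ G.edgeSet
  · lift s to G.edgeSet using hs
    rw [Subtype.val_injective.swap_apply, extendWeight_coe, extendWeight_coe, Function.comp_apply]
  · have hne (i : G.edgeSet) : s ≠ i := fun h => hs (h ▸ i.2)
    rw [Equiv.swap_apply_of_ne_of_ne (hne e) (hne e'), extendWeight_of_notMem _ hs,
      extendWeight_of_notMem _ hs]

variable [Fintype V]

lemma treeWeight_eq_sum (w : G.edgeSet → ℝ) (T : Finset (Sym2 V)) :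
    treeWeight G w T = ∑ s ∈ T, extendWeight w s := by
  rw [← Finset.sum_ite_mem_eq]
  refine Fintype.sum_of_injective _ Subtype.val_injective _ _ (fun s hs => ?_) fun e => ?_
  · rw [extendWeight_of_notMem w (by simpa using hs), ite_self]
  · rw [extendWeight_coe]

lemma treeWeight_exchange [DecidableEq V] (w : G.edgeSet → ℝ) {f g : Sym2 V} (hg : g ∈ T)
    (hf : f ∉ T.erase g) :
    treeWeight G w (insert f (T.erase g)) + extendWeight w g =
      treeWeight G w T + extendWeight w f := by
  rw [treeWeight_eq_sum, treeWeight_eq_sum, Finset.sum_insert hf, add_assoc,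
    Finset.sum_erase_add _ _ hg, add_comm]

lemma lt_of_mem_mstEvent (hw : w ∈ mstEvent G T) {a b : V} (hab : G.Adj a b) (habT : s(a, b) ∉ T)
    {p : (spanGraph T).Walk a b} (hp : p.IsPath) {g : Sym2 V} (hg : g ∈ p.edges) :
    extendWeight w g < extendWeight w s(a, b) := by
  have hlt := hw.2 _ (hw.1.exchange_of_isPath hab hp hg)
    fun h => habT (h ▸ Finset.mem_insert_self _ _)
  linarith [treeWeight_exchange w (mem_of_mem_edges_spanGraph hg)
    fun h => habT (Finset.mem_of_mem_erase h)]

lemma IsSpanningTree.exists_isLightest (hT : IsSpanningTree G T) (w : G.edgeSet → ℝ) :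
    ∃ T₀, IsSpanningTree G T₀ ∧
      ∀ T', IsSpanningTree G T' → treeWeight G w T₀ ≤ treeWeight G w T' :=
  Set.exists_min_image {T | IsSpanningTree G T} (treeWeight G w) (Set.toFinite _) ⟨T, hT⟩

/-- Every spanning tree other than `T` can be made lighter by an exchange, so the lightest one
is `T`. -/
lemma mem_mstEvent_of_forall_walk (hT : IsSpanningTree G T)
    (h : ∀ a b, G.Adj a b → s(a, b) ∉ T →
      ∃ p : (spanGraph T).Walk a b, ∀ g ∈ p.edges, extendWeight w g < extendWeight w s(a, b)) :
    w ∈ mstEvent G T := by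
  have exists_lighter (T' : Finset (Sym2 V)) (hT' : IsSpanningTree G T') (hne : T' ≠ T) :
      ∃ T'', IsSpanningTree G T'' ∧ treeWeight G w T'' < treeWeight G w T' := by
    obtain ⟨f, hfT', hfT⟩ := Finset.not_subset.1 (mt (hT.eq_of_subset hT') hne)
    induction f with | h c d =>
    obtain ⟨p, hp⟩ := h c d (hT'.1 hfT') hfT
    obtain ⟨a, b, hab, habT', hT''⟩ := hT'.exists_exchange_of_walk hfT'
      ((fromEdgeSet_le G).2 (Set.sdiff_subset.trans hT.1)) p
    refine ⟨_, hT'', ?_⟩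
    linarith [treeWeight_exchange w hfT' habT', hp _ hab]
  obtain ⟨T₀, hT₀, hmin⟩ := hT.exists_isLightest w
  obtain rfl : T₀ = T := by
    by_contra hne
    obtain ⟨T'', hT'', hlt⟩ := exists_lighter T₀ hT₀ hne
    exact hlt.not_ge (hmin T'' hT'')
  refine ⟨hT, fun T' hT' hne => ?_⟩
  obtain ⟨T'', hT'', hlt⟩ := exists_lighter T' hT' hne
  exact (hmin T'' hT'').trans_lt hlt

lemma exists_mem_mstEvent (hG : G.Connected) (hw : Function.Injective w) :
    ∃ T, w ∈ mstEvent G T := by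
  obtain ⟨H, hle, hH⟩ := hG.exists_isTree_le
  obtain ⟨T, hT, hmin⟩ := (isSpanningTree_edgeFinset hle hH).exists_isLightest w
  refine ⟨T, mem_mstEvent_of_forall_walk hT fun a b hab habT => ?_⟩
  obtain ⟨p, hp⟩ := hT.2.1.exists_isPath a b
  refine ⟨p, fun g hg => lt_of_le_of_ne ?_ fun heq => ?_⟩
  · have hle := hmin _ (hT.exchange_of_isPath hab hp hg)
    linarith [treeWeight_exchange w (mem_of_mem_edges_spanGraph hg)
      fun h => habT (Finset.mem_of_mem_erase h)]
  · have hgT := mem_of_mem_edges_spanGraph hg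
    have hgab : g = s(a, b) := congrArg Subtype.val <| hw <|
      (extendWeight_coe w ⟨g, hT.1 hgT⟩).symm.trans <|
        heq.trans (extendWeight_coe w ⟨s(a, b), hab⟩)
    exact habT (hgab ▸ hgT)

end MinimumSpanningTree

section CommonInteriorPoint

variable {ι α : Type*} [LinearOrder α] [TopologicalSpace α] [OrderTopology α] {I : ι → Set α}

lemma ordConnected_mem_nhds {s : Set α} (hs : s.OrdConnected) {x y c : α} (hx : x ∈ s)
    (hy : y ∈ s) (hxc : x < c) (hcy : c < y) : s ∈ nhds c :=
  Filter.mem_of_superset (Icc_mem_nhds hxc hcy) (hs.out hx hy)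

lemma exists_forall_mem_nhds_of_nontrivial [DenselyOrdered α] [Finite ι] [Nonempty ι]
    (hI : ∀ i, (I i).OrdConnected) (hnontrivial : ∀ i, (I i).Nontrivial)
    (hlt : ∀ i j, i ≠ j → ∃ x ∈ I i, ∃ y ∈ I j, x < y) : ∃ c, ∀ i, I i ∈ nhds c := by
  have hlt' (i j : ι) : ∃ x ∈ I i, ∃ y ∈ I j, x < y := by
    obtain rfl | hij := eq_or_ne i j
    exacts [(hnontrivial i).exists_lt, hlt i j hij]
  choose lo hlo hi hhi hlohi using hlt'
  have hmin (i : ι) : ∃ x ∈ I i, ∀ j, x ≤ lo i j :=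
    let ⟨j, hj⟩ := Finite.exists_min (lo i)
    ⟨lo i j, hlo i j, hj⟩
  have hmax (j : ι) : ∃ y ∈ I j, ∀ i, hi i j ≤ y :=
    let ⟨i, hi'⟩ := Finite.exists_max (hi · j)
    ⟨hi i j, hhi i j, hi'⟩
  choose a ha hle_lo using hmin
  choose b hb hhi_le using hmax
  obtain ⟨i₀, hi₀⟩ := Finite.exists_max a
  obtain ⟨j₀, hj₀⟩ := Finite.exists_min b
  obtain ⟨c, hac, hcb⟩ := exists_between <|
    (hle_lo i₀ j₀).trans_lt ((hlohi i₀ j₀).trans_le (hhi_le j₀ i₀))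
  exact ⟨c, fun i => ordConnected_mem_nhds (hI i) (ha i) (hb i)
    ((hi₀ i).trans_lt hac) (hcb.trans_le (hj₀ i))⟩

/-- The exceptional index `d` is unavoidable: one of the sets may be a single point. -/
lemma exists_mem_forall_ne_mem_nhds [DenselyOrdered α] [Finite ι] [Nonempty ι]
    (hI : ∀ i, (I i).OrdConnected) (hne : ∀ i, (I i).Nonempty)
    (hlt : ∀ i j, i ≠ j → ∃ x ∈ I i, ∃ y ∈ I j, x < y) :
    ∃ c d, c ∈ I d ∧ ∀ i ≠ d, I i ∈ nhds c := by
  by_cases hnontrivial : ∀ i, (I i).Nontrivial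
  · obtain ⟨c, hc⟩ := exists_forall_mem_nhds_of_nontrivial hI hnontrivial hlt
    obtain ⟨d⟩ := ‹Nonempty ι›
    exact ⟨c, d, mem_of_mem_nhds (hc d), fun i _ => hc i⟩
  · push Not at hnontrivial
    obtain ⟨d, hd⟩ := hnontrivial
    obtain ⟨c, hc⟩ := hne d
    refine ⟨c, d, hc, fun i hid => ?_⟩
    obtain ⟨x, hx, c₁, hc₁, hxc⟩ := hlt i d hid
    obtain ⟨c₂, hc₂, y, hy, hcy⟩ := hlt d i hid.symm
    rw [hd hc₁ hc] at hxc
    rw [hd hc₂ hc] at hcy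
    exact ordConnected_mem_nhds (hI i) hx hy hxc hcy

end CommonInteriorPoint

section ProductMeasure

lemma measSupport_eq_support (μ : Measure ℝ) : measSupport μ = μ.support := by
  ext x
  rw [Measure.support_eq_forall_isOpen]
  exact forall_congr' fun U => forall_comm

variable {ι : Type*}

/-- The weight vectors that order the index set at least as finely as the level function `ℓ`. -/
def orderEvent (ℓ : ι → ℝ) : Set (ι → ℝ) :=
  {w | ∀ i j, ℓ i < ℓ j → w i < w j}

lemma isOpen_orderEvent [Finite ι] (ℓ : ι → ℝ) : IsOpen (orderEvent ℓ) := by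
  simp only [orderEvent, Set.ofPred_forall]
  exact isOpen_iInter_of_finite fun i => isOpen_iInter_of_finite fun j =>
    isOpen_iInter_of_finite fun _ => isOpen_lt (continuous_apply i) (continuous_apply j)

variable [Fintype ι]

section Support

variable {X : ι → Type*} [∀ i, TopologicalSpace (X i)] [∀ i, MeasurableSpace (X i)]
  (μ : ∀ i, Measure (X i)) [∀ i, SigmaFinite (μ i)]

lemma pi_support_subset_support_pi :
    Set.univ.pi (fun i => (μ i).support) ⊆ (Measure.pi μ).support := by
  intro x hx
  rw [Measure.mem_support_iff_forall]
  intro U hU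
  rw [nhds_pi, Filter.mem_pi'] at hU
  obtain ⟨_, t, ht, hsub⟩ := hU
  refine (pos_iff_ne_zero.2 ?_).trans_le
    (measure_mono ((Set.pi_mono' (fun _ _ => subset_rfl) (Set.subset_univ _)).trans hsub))
  rw [Measure.pi_pi]
  exact Finset.prod_ne_zero_iff.2 fun i _ =>
    ((Measure.mem_support_iff_forall _).1 (hx i trivial) (t i) (ht i)).ne'

lemma ae_pi_forall_mem_support [∀ i, HereditarilyLindelofSpace (X i)] :
    ∀ᵐ x ∂Measure.pi μ, ∀ i, x i ∈ (μ i).support :=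
  ae_all_iff.2 fun _ => (Measure.tendsto_eval_ae_ae (μ := μ)).eventually Measure.support_mem_ae

lemma pi_ne_zero_of_isOpen {U : Set (∀ i, X i)} (hU : IsOpen U) {x : ∀ i, X i} (hxU : x ∈ U)
    (hx : ∀ i, x i ∈ (μ i).support) : Measure.pi μ U ≠ 0 :=
  ((Measure.mem_support_iff_forall _).1 (pi_support_subset_support_pi μ fun i _ => hx i) U
    (hU.mem_nhds hxU)).ne'

end Support

lemma measure_pi_preimage_comp_perm {X : Type*} [MeasurableSpace X] (μ : ι → Measure X)
    [∀ i, SigmaFinite (μ i)] (σ : Equiv.Perm ι) (hσ : ∀ i, μ (σ i) = μ i) (s : Set (ι → X)) :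
    Measure.pi μ ((· ∘ σ) ⁻¹' s) = Measure.pi μ s := by
  have hσ' : (fun i => μ (σ.symm i)) = μ := by
    funext i
    rw [← hσ (σ.symm i), σ.apply_symm_apply]
  have hcomp : (· ∘ σ) = MeasurableEquiv.piCongrLeft (fun _ => X) σ.symm := by
    funext w i
    simpa [MeasurableEquiv.coe_piCongrLeft] using
      (Equiv.piCongrLeft_apply_apply (fun _ => X) σ.symm w (σ i)).symm
  have hpres := measurePreserving_piCongrLeft μ σ.symm
  rw [hσ'] at hpres
  rw [hcomp, hpres.measure_preimage_equiv]

lemma measure_pi_preimage_comp_swap [DecidableEq ι] {X : Type*} [MeasurableSpace X]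
    (μ : ι → Measure X) [∀ i, SigmaFinite (μ i)] {i j : ι} (hij : μ i = μ j) (s : Set (ι → X)) :
    Measure.pi μ ((· ∘ Equiv.swap i j) ⁻¹' s) = Measure.pi μ s := by
  refine measure_pi_preimage_comp_perm μ (Equiv.swap i j) (fun k => ?_) s
  rw [Equiv.swap_apply_def]
  split_ifs with hi hj
  exacts [hi ▸ hij.symm, hj ▸ hij, rfl]

variable {ν : ι → Measure ℝ} [∀ i, SigmaFinite (ν i)]

lemma exists_mem_support_lt {i j : ι} (h : Measure.pi ν {w | w i < w j} ≠ 0) :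
    ∃ x ∈ (ν i).support, ∃ y ∈ (ν j).support, x < y :=
  let ⟨w, hlt, hw⟩ := Measure.exists_mem_of_measure_ne_zero_of_ae h
    (ae_restrict_of_ae (ae_pi_forall_mem_support ν))
  ⟨w i, hw i, w j, hw j, hlt⟩

/-- The supports share a point `c`, interior to all of them but one; the coordinates can be
perturbed around `c` in any prescribed order. -/
lemma pi_orderEvent_ne_zero [Nonempty ι] [∀ i, NeZero (ν i)]
    (hconn : ∀ i, IsPreconnected (ν i).support)
    (hlt : ∀ i j, i ≠ j → Measure.pi ν {w | w i < w j} ≠ 0) (ℓ : ι → ℝ) :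
    Measure.pi ν (orderEvent ℓ) ≠ 0 := by
  obtain ⟨c, d, hcd, hc⟩ := exists_mem_forall_ne_mem_nhds (fun i => (hconn i).ordConnected)
    (fun i => Measure.nonempty_support (NeZero.ne (ν i)))
    fun i j hij => exists_mem_support_lt (hlt i j hij)
  let p (ε : ℝ) (i : ι) : ℝ := c + ε * (ℓ i - ℓ d)
  have hmem : ∀ᶠ ε in nhds 0, ∀ i, p ε i ∈ (ν i).support := by
    refine Filter.eventually_all.2 fun i => ?_
    obtain rfl | hid := eq_or_ne i d
    · simpa [p] using hcd
    · have hp : Continuous fun ε => p ε i := by fun_prop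
      exact hp.continuousAt.eventually_mem (by simpa [p] using hc i hid)
  obtain ⟨ε, hε, hε₀⟩ :=
    ((hmem.filter_mono nhdsWithin_le_nhds).and (self_mem_nhdsWithin (s := Set.Ioi 0))).exists
  refine pi_ne_zero_of_isOpen ν (isOpen_orderEvent ℓ) (x := p ε) (fun i j hij => ?_) hε
  have := mul_lt_mul_of_pos_left (sub_lt_sub_right hij (ℓ d)) hε₀
  exact add_lt_add_right this c

end ProductMeasure

section StarTrees

lemma exists_mem_edge_notMem_edge {G : SimpleGraph V} {f g : G.edgeSet} (hfg : f ≠ g) :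
    ∃ a ∈ (g : Sym2 V), a ∉ (f : Sym2 V) := by
  obtain ⟨g, hg⟩ := g
  induction g with | h p q =>
  by_contra! h
  exact hfg (Subtype.ext ((Sym2.mem_and_mem_iff hg.ne).1
    ⟨h p (Sym2.mem_mk_left p q), h q (Sym2.mem_mk_right p q)⟩))

variable [Fintype V] [DecidableEq V] {w : (⊤ : SimpleGraph V).edgeSet → ℝ} {a b x y z : V}

/-- The edge set of the star centred at `z`, joining `z` to every other vertex. -/
def starTree (z : V) : Finset (Sym2 V) :=
  (starGraph z).edgeFinset

/-- The edge set of the star centred at `z`, with its leaf `x` unhooked from `z` and hooked to the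
leaf `y` instead. -/
def hookedStarTree (x y z : V) : Finset (Sym2 V) :=
  insert s(x, y) ((starTree z).erase s(x, z))

lemma mem_starTree : s(a, b) ∈ starTree z ↔ a ≠ b ∧ (a = z ∨ b = z) := by
  rw [starTree, mem_edgeFinset, mem_edgeSet, starGraph_adj]

lemma spanGraph_starTree_adj : (spanGraph (starTree z)).Adj a b ↔ a ≠ b ∧ (a = z ∨ b = z) := by
  rw [starTree, spanGraph_edgeFinset, starGraph_adj]

lemma isSpanningTree_starTree (z : V) : IsSpanningTree ⊤ (starTree z) :=
  isSpanningTree_edgeFinset le_top (isTree_starGraph z)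

lemma isSpanningTree_hookedStarTree (hxy : x ≠ y) (hxz : x ≠ z) (hyz : y ≠ z) :
    IsSpanningTree ⊤ (hookedStarTree x y z) := by
  have hx : (spanGraph (starTree z)).Adj x z := spanGraph_starTree_adj.2 ⟨hxz, .inr rfl⟩
  have hy : (spanGraph (starTree z)).Adj z y := spanGraph_starTree_adj.2 ⟨hyz.symm, .inl rfl⟩
  exact (isSpanningTree_starTree z).exchange_of_isPath (p := .cons hx (.cons hy .nil)) hxy
    (by simp [*, hyz.symm]) (by simp)

lemma mem_mstEvent_starTree_iff :
    w ∈ mstEvent ⊤ (starTree z) ↔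
      ∀ a b, a ≠ b → a ≠ z → b ≠ z → extendWeight w s(a, z) < extendWeight w s(a, b) := by
  have adj_center (a : V) (ha : a ≠ z) : (spanGraph (starTree z)).Adj a z :=
    spanGraph_starTree_adj.2 ⟨ha, .inr rfl⟩
  refine ⟨fun hw a b hab haz hbz => ?_, fun h => ?_⟩
  · exact lt_of_mem_mstEvent hw hab (by simp [mem_starTree, *])
      (p := .cons (adj_center a haz) (.cons (adj_center b hbz).symm .nil))
      (by simp [*, hbz.symm]) (by simp)
  · refine mem_mstEvent_of_forall_walk (isSpanningTree_starTree z) fun a b hab habT => ?_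
    have haz : a ≠ z := fun haz => habT (mem_starTree.2 ⟨hab, .inl haz⟩)
    have hbz : b ≠ z := fun hbz => habT (mem_starTree.2 ⟨hab, .inr hbz⟩)
    refine ⟨.cons (adj_center a haz) (.cons (adj_center b hbz).symm .nil), ?_⟩
    have hb := h b a hab.symm hbz haz
    rw [Sym2.eq_swap, Sym2.eq_swap (a := b)] at hb
    simpa using ⟨h a b hab haz hbz, hb⟩

lemma spanGraph_hookedStarTree_adj :
    (spanGraph (hookedStarTree x y z)).Adj a b ↔
      a ≠ b ∧ (s(a, b) = s(x, y) ∨ s(a, b) ≠ s(x, z) ∧ (a = z ∨ b = z)) := by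
  rw [spanGraph_adj, hookedStarTree, Finset.mem_insert, Finset.mem_erase, mem_starTree]
  tauto

lemma spanGraph_hookedStarTree_adj_hook (hxy : x ≠ y) :
    (spanGraph (hookedStarTree x y z)).Adj x y :=
  spanGraph_hookedStarTree_adj.2 ⟨hxy, .inl rfl⟩

lemma spanGraph_hookedStarTree_adj_center (hxz : x ≠ z) (hax : a ≠ x) (haz : a ≠ z) :
    (spanGraph (hookedStarTree x y z)).Adj a z :=
  spanGraph_hookedStarTree_adj.2 ⟨haz, .inr ⟨by simp [hax, hxz.symm], .inr rfl⟩⟩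

lemma notMem_hookedStarTree_unhooked (hxz : x ≠ z) (hyz : y ≠ z) :
    s(x, z) ∉ hookedStarTree x y z := by
  simp [hookedStarTree, hxz.symm, hyz.symm]

lemma notMem_hookedStarTree (hab : s(a, b) ≠ s(x, y)) (haz : a ≠ z) (hbz : b ≠ z) :
    s(a, b) ∉ hookedStarTree x y z := by
  simp [hookedStarTree, mem_starTree, -Sym2.eq, *]

lemma lt_unhooked_of_mem_mstEvent_hookedStarTree (hxy : x ≠ y) (hxz : x ≠ z) (hyz : y ≠ z)
    (hw : w ∈ mstEvent ⊤ (hookedStarTree x y z)) :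
    ∀ g ∈ [s(x, y), s(y, z)], extendWeight w g < extendWeight w s(x, z) := by
  have hook : (spanGraph (hookedStarTree x y z)).Adj x y := spanGraph_hookedStarTree_adj_hook hxy
  have hy : (spanGraph (hookedStarTree x y z)).Adj y z :=
    spanGraph_hookedStarTree_adj_center hxz hxy.symm hyz
  intro g hg
  exact lt_of_mem_mstEvent hw hxz (notMem_hookedStarTree_unhooked hxz hyz)
    (p := .cons hook (.cons hy .nil)) (by simp [*]) hg

lemma lt_of_mem_mstEvent_hookedStarTree_leaf (hxy : x ≠ y) (hxz : x ≠ z) (hyz : y ≠ z)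
    (hw : w ∈ mstEvent ⊤ (hookedStarTree x y z)) (hax : a ≠ x) (hay : a ≠ y) (haz : a ≠ z) :
    ∀ g ∈ [s(x, y), s(y, z), s(z, a)], extendWeight w g < extendWeight w s(x, a) := by
  have hook : (spanGraph (hookedStarTree x y z)).Adj x y := spanGraph_hookedStarTree_adj_hook hxy
  have hy : (spanGraph (hookedStarTree x y z)).Adj y z :=
    spanGraph_hookedStarTree_adj_center hxz hxy.symm hyz
  have ha : (spanGraph (hookedStarTree x y z)).Adj z a :=
    (spanGraph_hookedStarTree_adj_center hxz hax haz).symm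
  intro g hg
  exact lt_of_mem_mstEvent hw hax.symm (notMem_hookedStarTree (by simp [hay, hxy]) hxz haz)
    (p := .cons hook (.cons hy (.cons ha .nil)))
    (by simp [*, hax.symm, hay.symm, haz.symm]) hg

lemma lt_of_mem_mstEvent_hookedStarTree_of_ne (hxz : x ≠ z)
    (hw : w ∈ mstEvent ⊤ (hookedStarTree x y z)) (hab : a ≠ b) (hax : a ≠ x) (haz : a ≠ z)
    (hbx : b ≠ x) (hbz : b ≠ z) : extendWeight w s(a, z) < extendWeight w s(a, b) := by
  have ha : (spanGraph (hookedStarTree x y z)).Adj a z :=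
    spanGraph_hookedStarTree_adj_center hxz hax haz
  have hb : (spanGraph (hookedStarTree x y z)).Adj z b :=
    (spanGraph_hookedStarTree_adj_center hxz hbx hbz).symm
  exact lt_of_mem_mstEvent hw hab (notMem_hookedStarTree (by simp [*]) haz hbz)
    (p := .cons ha (.cons hb .nil)) (by simp [*, hbz.symm]) (by simp)

lemma comp_swap_mem_mstEvent_starTree {e e' : (⊤ : SimpleGraph V).edgeSet} (hxy : x ≠ y)
    (hxz : x ≠ z) (hyz : y ≠ z) (he : (e : Sym2 V) = s(x, y)) (he' : (e' : Sym2 V) = s(x, z))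
    (hw : w ∈ mstEvent ⊤ (hookedStarTree x y z)) :
    w ∘ Equiv.swap e e' ∈ mstEvent ⊤ (starTree z) := by
  have hunhooked := lt_unhooked_of_mem_mstEvent_hookedStarTree hxy hxz hyz hw
  have swap_of_ne {p q : V} (h : s(p, q) ≠ s(x, y)) (h' : s(p, q) ≠ s(x, z)) :
      Equiv.swap s(x, y) s(x, z) s(p, q) = s(p, q) := Equiv.swap_apply_of_ne_of_ne h h'
  refine mem_mstEvent_starTree_iff.2 fun a b hab haz hbz => ?_
  rw [extendWeight_comp_swap, extendWeight_comp_swap, he, he']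
  obtain rfl | hax := eq_or_ne a x
  · rw [Equiv.swap_apply_right]
    obtain rfl | hby := eq_or_ne b y
    · rw [Equiv.swap_apply_left]
      exact hunhooked _ (by simp)
    · rw [swap_of_ne (by simp [*]) (by simp [*])]
      exact lt_of_mem_mstEvent_hookedStarTree_leaf hxy hxz hyz hw hab.symm hby hbz _ (by simp)
  rw [swap_of_ne (p := a) (q := z) (by simp [hxz.symm, *]) (by simp [*])]
  obtain rfl | hbx := eq_or_ne b x
  · rw [Sym2.eq_swap (a := a) (b := b)]
    obtain rfl | hay := eq_or_ne a y
    · rw [Equiv.swap_apply_left]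
      exact hunhooked _ (by simp)
    · rw [swap_of_ne (by simp [*]) (by simp [*])]
      exact lt_of_mem_mstEvent_hookedStarTree_leaf hxy hxz hyz hw hax hay haz _
        (by simp [Sym2.eq_swap])
  · rw [swap_of_ne (by simp [*]) (by simp [*])]
    exact lt_of_mem_mstEvent_hookedStarTree_of_ne hxz hw hab hax haz hbx hbz

end StarTrees

section NonUniformity

lemma extendWeight_lt_of_mem_orderEvent {G : SimpleGraph V} {ℓ : Sym2 V → ℝ} {w : G.edgeSet → ℝ}
    (hw : w ∈ orderEvent fun e : G.edgeSet => ℓ e) {f g : Sym2 V} (hf : f ∈ G.edgeSet)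
    (hg : g ∈ G.edgeSet) (h : ℓ f < ℓ g) : extendWeight w f < extendWeight w g := by
  lift f to G.edgeSet using hf
  lift g to G.edgeSet using hg
  simpa only [extendWeight_coe] using hw f g h

variable [Fintype V]

/-- The tree can be chosen to contain `g` and to have `g` on the fundamental cycle of `f`: a star
centred on an endpoint of `g` if `f` and `g` meet, and such a star with a hooked leaf otherwise. -/
lemma exists_mstEvent_subset_lt {f g : (⊤ : SimpleGraph V).edgeSet} (hfg : f ≠ g) :
    ∃ T, IsSpanningTree ⊤ T ∧ mstEvent ⊤ T ⊆ {w | w g < w f} := by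
  suffices ∃ T, IsSpanningTree ⊤ T ∧
      ∀ w : (⊤ : SimpleGraph V).edgeSet → ℝ, w ∈ mstEvent ⊤ T →
        extendWeight w g < extendWeight w f by
    simpa only [extendWeight_coe, Set.subset_def, Set.mem_ofPred_eq] using this
  obtain ⟨a, ⟨b, hg⟩, haf⟩ := exists_mem_edge_notMem_edge hfg
  obtain ⟨f, hf⟩ := f
  have hab : a ≠ b := by simpa [hg] using g.2
  by_cases hbf : b ∈ f
  · obtain ⟨d, rfl⟩ := hbf
    simp only [Sym2.mem_iff, not_or] at haf
    refine ⟨starTree a, isSpanningTree_starTree a, fun w hw => ?_⟩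
    rw [hg, Sym2.eq_swap]
    exact mem_mstEvent_starTree_iff.1 hw b d hf hab.symm (Ne.symm haf.2)
  · induction f with | h d c =>
    simp only [Sym2.mem_iff, not_or] at haf hbf
    have hdb := Ne.symm hbf.1
    have hda := Ne.symm haf.1
    refine ⟨hookedStarTree d b a, isSpanningTree_hookedStarTree hdb hda hab.symm, fun w hw => ?_⟩
    exact lt_of_mem_mstEvent_hookedStarTree_leaf hdb hda hab.symm hw (Adj.ne' (G := ⊤) hf)
      (Ne.symm hbf.2) (Ne.symm haf.2) g (by simp [hg, Sym2.eq_swap])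

lemma exists_measure_mstEvent_ne_zero {G : SimpleGraph V} [Fintype G.edgeSet] (hG : G.Connected)
    (ν : G.edgeSet → Measure ℝ) [∀ e, IsProbabilityMeasure (ν e)]
    (hnc : ∀ e e', e ≠ e' → Measure.pi ν {w | w e = w e'} = 0) :
    ∃ T, Measure.pi ν (mstEvent G T) ≠ 0 := by
  have ae_injective : ∀ᵐ w ∂Measure.pi ν, Function.Injective w := by
    refine ae_all_iff.2 fun e => ae_all_iff.2 fun e' => ?_
    obtain rfl | hee := eq_or_ne e e'
    · exact .of_forall fun _ _ => rfl
    · filter_upwards [measure_eq_zero_iff_ae_notMem.1 (hnc e e' hee)] with w hw heq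
      exact absurd heq hw
  by_contra! hzero
  have ae_notMem : ∀ᵐ w ∂Measure.pi ν, ∀ T, w ∉ mstEvent G T :=
    ae_all_iff.2 fun T => measure_eq_zero_iff_ae_notMem.1 (hzero T)
  obtain ⟨w, hinj, hw⟩ := (ae_injective.and ae_notMem).exists
  obtain ⟨T, hT⟩ := exists_mem_mstEvent hG hinj
  exact hw T hT

variable [DecidableEq V] {ν : (⊤ : SimpleGraph V).edgeSet → Measure ℝ}

lemma exists_orderEvent_subset_mstEvent_starTree {x y z u : V} (hxy : x ≠ y) (hxz : x ≠ z)
    (hyz : y ≠ z) (hux : u ≠ x) (huy : u ≠ y) (huz : u ≠ z) :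
    ∃ ℓ : (⊤ : SimpleGraph V).edgeSet → ℝ, orderEvent ℓ ⊆
      mstEvent ⊤ (starTree z) ∩ {w | extendWeight w s(x, u) < extendWeight w s(y, z)} := by
  let ℓ (s : Sym2 V) : ℝ := (if z ∈ s then 0 else 1) + if y ∈ s then 2 else 0
  refine ⟨fun e => ℓ e, fun w hw => ⟨mem_mstEvent_starTree_iff.2 fun a b hab haz hbz => ?_, ?_⟩⟩
  · refine extendWeight_lt_of_mem_orderEvent hw haz hab ?_
    by_cases hya : y = a
    · simp [ℓ, hya, haz.symm, hbz.symm]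
    · suffices (0 : ℝ) < 1 + if y = b then 2 else 0 by
        simpa [ℓ, hya, hyz, haz.symm, hbz.symm]
      positivity
  · exact extendWeight_lt_of_mem_orderEvent hw hux.symm hyz
      (by simp [ℓ, hxy.symm, hxz.symm, huy.symm, huz.symm])

lemma measure_mstEvent_hookedStarTree_lt [∀ e, IsFiniteMeasure (ν e)]
    (hord : ∀ ℓ, Measure.pi ν (orderEvent ℓ) ≠ 0) {x y z u : V} (hxy : x ≠ y) (hxz : x ≠ z)
    (hyz : y ≠ z) (hux : u ≠ x) (huy : u ≠ y) (huz : u ≠ z) {e e' : (⊤ : SimpleGraph V).edgeSet}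
    (he : (e : Sym2 V) = s(x, y)) (he' : (e' : Sym2 V) = s(x, z)) (hsame : ν e = ν e') :
    Measure.pi ν (mstEvent ⊤ (hookedStarTree x y z)) < Measure.pi ν (mstEvent ⊤ (starTree z)) := by
  obtain ⟨ℓ, hℓ⟩ := exists_orderEvent_subset_mstEvent_starTree hxy hxz hyz hux huy huz
  let hooked := mstEvent ⊤ (hookedStarTree x y z)
  let swapped := (· ∘ Equiv.swap e e') ⁻¹' orderEvent ℓ
  have hswapped : Measure.pi ν swapped ≠ 0 := by
    rw [measure_pi_preimage_comp_swap ν hsame]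
    exact hord ℓ
  have hswapped_measurable : MeasurableSet swapped :=
    ((isOpen_orderEvent ℓ).preimage (by fun_prop)).measurableSet
  have hdisjoint : Disjoint hooked swapped := by
    refine Set.disjoint_left.2 fun w hw hwℓ => ?_
    have hgt := (hℓ hwℓ).2
    rw [Set.mem_ofPred_eq, extendWeight_comp_swap, extendWeight_comp_swap, he, he',
      Equiv.swap_apply_of_ne_of_ne (by simp [*]) (by simp [*]),
      Equiv.swap_apply_of_ne_of_ne (by simp [hxy.symm, hxz.symm])
        (by simp [hxy.symm, hxz.symm])] at hgt
    exact hgt.not_gt <|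
      lt_of_mem_mstEvent_hookedStarTree_leaf hxy hxz hyz hw hux huy huz _ (by simp)
  calc Measure.pi ν hooked
      < Measure.pi ν hooked + Measure.pi ν swapped :=
        ENNReal.lt_add_right (measure_ne_top _ _) hswapped
    _ = Measure.pi ν (hooked ∪ swapped) := (measure_union hdisjoint hswapped_measurable).symm
    _ ≤ Measure.pi ν ((· ∘ Equiv.swap e e') ⁻¹' mstEvent ⊤ (starTree z)) :=
        measure_mono <| Set.union_subset
          (fun w hw => comp_swap_mem_mstEvent_starTree hxy hxz hyz he he' hw)
          fun w hw => (hℓ hw).1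
    _ = Measure.pi ν (mstEvent ⊤ (starTree z)) := measure_pi_preimage_comp_swap ν hsame _

end NonUniformity

theorem connected_support_not_uniform_general [Fintype V] [DecidableEq V]
    (hV : 4 ≤ Fintype.card V) (ν : (⊤ : SimpleGraph V).edgeSet → Measure ℝ)
    [∀ e, IsProbabilityMeasure (ν e)]
    (hmst : ∃ T, Measure.pi ν (mstEvent (⊤ : SimpleGraph V) T) ≠ 0)
    (hconn : ∀ e, IsPreconnected (measSupport (ν e)))
    (e e' : (⊤ : SimpleGraph V).edgeSet) (hee : e ≠ e')
    (hshare : ∃ x : V, x ∈ (e : Sym2 V) ∧ x ∈ (e' : Sym2 V))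
    (hsame : ν e = ν e') :
    ∃ T T' : Finset (Sym2 V),
      IsSpanningTree (⊤ : SimpleGraph V) T ∧ IsSpanningTree (⊤ : SimpleGraph V) T' ∧
      (Measure.pi ν (mstEvent (⊤ : SimpleGraph V) T)).toReal ≠
        (Measure.pi ν (mstEvent (⊤ : SimpleGraph V) T')).toReal := by
  simp only [measSupport_eq_support] at hconn
  by_contra! huniform
  have hpos (T) (hT : IsSpanningTree ⊤ T) : Measure.pi ν (mstEvent ⊤ T) ≠ 0 := by
    obtain ⟨T₀, hT₀⟩ := hmst
    have hspanning := (nonempty_of_measure_ne_zero hT₀).some_mem.1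
    have := huniform T T₀ hT hspanning
    rw [ENNReal.toReal_eq_toReal_iff' (measure_ne_top _ _) (measure_ne_top _ _)] at this
    rwa [this]
  have hlt (f g) (hfg : f ≠ g) : Measure.pi ν {w | w f < w g} ≠ 0 := by
    obtain ⟨T, hT, hsub⟩ := exists_mstEvent_subset_lt hfg.symm
    exact fun hzero => hpos T hT (measure_mono_null hsub hzero)
  have : Nonempty (⊤ : SimpleGraph V).edgeSet := ⟨e⟩
  have hord := pi_orderEvent_ne_zero hconn hlt
  obtain ⟨x, ⟨y, he⟩, ⟨z, he'⟩⟩ := hshare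
  have hxy : x ≠ y := by simpa [he] using e.2
  have hxz : x ≠ z := by simpa [he'] using e'.2
  have hyz : y ≠ z := fun h => hee (Subtype.ext (by rw [he, he', h]))
  obtain ⟨u, -, hu⟩ := Finset.exists_mem_notMem_of_card_lt_card (s := {x, y, z})
    (t := Finset.univ) (Finset.card_le_three.trans_lt (by rwa [Finset.card_univ]))
  simp only [Finset.mem_insert, Finset.mem_singleton, not_or] at hu
  refine (measure_mstEvent_hookedStarTree_lt hord hxy hxz hyz hu.1 hu.2.1 hu.2.2 he he' hsame).ne ?_
  exact (ENNReal.toReal_eq_toReal_iff' (measure_ne_top _ _) (measure_ne_top _ _)).1 <|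
    huniform _ _ (isSpanningTree_hookedStarTree hxy hxz hyz) (isSpanningTree_starTree z)

/-- Connected-support limitation (`n ≥ 4`): if `(X_e)` is a non-colliding product
measure on the edges of `K_n` in which each edge law has connected topological support,
and two distinct edges sharing an endpoint have identical laws, then the induced
minimum-spanning-tree distribution is not uniform. -/
theorem connected_support_not_uniform (n : ℕ) (hn : 4 ≤ n)
    (ν : (⊤ : SimpleGraph (Fin n)).edgeSet → Measure ℝ)
    (hprob : ∀ e, IsProbabilityMeasure (ν e))
    (hnc : ∀ e e' : (⊤ : SimpleGraph (Fin n)).edgeSet, e ≠ e' →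
      Measure.pi ν {w | w e = w e'} = 0)
    (hconn : ∀ e, IsPreconnected (measSupport (ν e)))
    (e e' : (⊤ : SimpleGraph (Fin n)).edgeSet) (hee : e ≠ e')
    (hshare : ∃ x : Fin n, x ∈ (e : Sym2 (Fin n)) ∧ x ∈ (e' : Sym2 (Fin n)))
    (hsame : ν e = ν e') :
    ∃ T T' : Finset (Sym2 (Fin n)),
      IsSpanningTree (⊤ : SimpleGraph (Fin n)) T ∧
      IsSpanningTree (⊤ : SimpleGraph (Fin n)) T' ∧
      (Measure.pi ν (mstEvent (⊤ : SimpleGraph (Fin n)) T)).toReal ≠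
        (Measure.pi ν (mstEvent (⊤ : SimpleGraph (Fin n)) T')).toReal := by
  have : NeZero n := ⟨by omega⟩
  exact connected_support_not_uniform_general (by simpa using hn) ν
    (exists_measure_mstEvent_ne_zero connected_top ν hnc) hconn e e' hee hshare hsame

end RST
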